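/- arXiv:1507.08503 — 8 statements merged into one kernel-verified Lean document; each statement's English description precedes it below -/
import Mathlib

section
/- Let q be a prime power, and suppose there exists a q-Steiner system S_q(t,k,n) with 0 < t < k < n. Then for every integer i with 1 ≤ i ≤ t−1 there exists a q-Steiner system S_q(t−i, k−i, n−i), i.e., a set of (k−i)-dimensional subspaces of F_q^{n−i} such that every (t−i)-dimensional subspace of F_q^{n−i} is contained in exactly one of them. -/
/-!
The derived design at an `i`-dimensional subspace `W` is again a Steiner system. Let `f` be the
coordinate projection `F^n → F^(n-i)`, which is onto with kernel `W` of dimension `i`. Pulling back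
along `f` identifies the subspaces of `F^(n-i)` with those subspaces of `F^n` that contain `W`; it
preserves and reflects inclusion and raises dimension by exactly `i` (`finrank_comap_of_surj`).
Take as new blocks the subspaces whose pullback is a block. A `(t-i)`-dimensional `T` pulls back to
a `t`-dimensional space; the unique block above it contains `W`, hence is itself a pullback.
-/

/-- The Gaussian binomial coefficient `[n choose k]_q`. -/
def gaussBinom (q n k : ℕ) : ℕ :=
  (∏ i ∈ Finset.range k, (q ^ (n - i) - 1)) / ∏ i ∈ Finset.range k, (q ^ (k - i) - 1)

/-- Projection of `F^n` onto the first `m` coordinates (deleting the last `n - m`). -/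
def proj (F : Type*) [Field F] (m n : ℕ) (h : m ≤ n) :
    (Fin n → F) →ₗ[F] (Fin m → F) :=
  LinearMap.funLeft F F (Fin.castLE h)

/-- A `q`-Steiner system `S_q(t,k,n)`: a set of `k`-dimensional subspaces of `F^n`
such that every `t`-dimensional subspace is contained in exactly one of them. -/
def IsSteiner (F : Type*) [Field F] (t k n : ℕ)
    (D : Set (Submodule F (Fin n → F))) : Prop :=
  (∀ B ∈ D, Module.finrank F B = k) ∧
  ∀ T : Submodule F (Fin n → F), Module.finrank F T = t →
    ∃! B, B ∈ D ∧ T ≤ B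

/-- Rank-nullity, applied to the restriction of `f` to the preimage of `S`. -/
theorem finrank_comap_of_surj {F V V' : Type*} [Field F] [AddCommGroup V] [Module F V]
    [AddCommGroup V'] [Module F V'] [FiniteDimensional F V] (f : V →ₗ[F] V')
    (hf : Function.Surjective f) (S : Submodule F V') :
    Module.finrank F (S.comap f) = Module.finrank F S + Module.finrank F (LinearMap.ker f) := by
  have h := LinearMap.finrank_range_add_finrank_ker (f.domRestrict (S.comap f))
  have h1 : LinearMap.range (f.domRestrict (S.comap f)) = S := by
    rw [LinearMap.range_domRestrict, Submodule.map_comap_eq_of_surjective hf]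
  have h2 : Module.finrank F (LinearMap.ker (f.domRestrict (S.comap f)))
      = Module.finrank F (LinearMap.ker f) := by
    rw [LinearMap.ker_domRestrict]
    exact (Submodule.comapSubtypeEquivOfLe (LinearMap.ker_le_comap f)).finrank_eq
  rw [h1, h2] at h
  exact h.symm

theorem proj_surjective (F : Type*) [Field F] (m n : ℕ) (h : m ≤ n) :
    Function.Surjective (proj F m n h) :=
  LinearMap.funLeft_surjective_of_injective F F _ (Fin.castLE_injective h)

theorem finrank_ker_proj (F : Type*) [Field F] (m n : ℕ) (h : m ≤ n) :
    Module.finrank F (LinearMap.ker (proj F m n h)) = n - m := by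
  have := LinearMap.finrank_range_add_finrank_ker (proj F m n h)
  rw [LinearMap.range_eq_top.2 (proj_surjective F m n h), finrank_top, Module.finrank_fin_fun,
    Module.finrank_fin_fun] at this
  omega

theorem stmt_0 (F : Type*) [Field F] [Fintype F] (t k n : ℕ)
    (ht : 0 < t) (htk : t < k) (hkn : k < n)
    (hD : ∃ D : Set (Submodule F (Fin n → F)), IsSteiner F t k n D) :
    ∀ i : ℕ, 1 ≤ i → i ≤ t - 1 →
      ∃ D' : Set (Submodule F (Fin (n - i) → F)), IsSteiner F (t - i) (k - i) (n - i) D' := by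
  obtain ⟨D, hDk, hDt⟩ := hD
  intro i hi1 hit
  have hle : n - i ≤ n := Nat.sub_le n i
  set f := proj F (n - i) n hle
  have hf : Function.Surjective f := proj_surjective F (n - i) n hle
  have hdim : ∀ S : Submodule F (Fin (n - i) → F),
      Module.finrank F (S.comap f) = Module.finrank F S + i := by
    intro S
    rw [finrank_comap_of_surj f hf S, finrank_ker_proj F (n - i) n hle]
    omega
  refine ⟨{S | S.comap f ∈ D}, ?_, ?_⟩
  · intro S hS
    have h1 := hDk _ hS
    rw [hdim] at h1
    omega
  · intro T hT
    obtain ⟨B, ⟨hBD, hTB⟩, hB⟩ := hDt (T.comap f) (by rw [hdim]; omega)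
    have hBf : (B.map f).comap f = B :=
      Submodule.comap_map_eq_self ((LinearMap.ker_le_comap f).trans hTB)
    refine ⟨B.map f, ⟨?_, ?_⟩, ?_⟩
    · change (B.map f).comap f ∈ D
      rwa [hBf]
    · rwa [← Submodule.comap_le_comap_iff_of_surjective hf, hBf]
    · rintro S ⟨hSD, hTS⟩
      rw [← hB _ ⟨hSD, Submodule.comap_mono hTS⟩, Submodule.map_comap_eq_of_surjective hf]
end

section
/- Let q be a prime power, and suppose there exists a q-Steiner system S_q(t,k,n) with 0 < t < k < n. Then for every integer i with 0 ≤ i ≤ t−1, the Gaussian binomial coefficient [k−i choose t−i]_q divides the Gaussian binomial coefficient [n−i choose t−i]_q. -/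
/-- A linearly independent `r`-tuple is the same as an `r`-dimensional subspace (its span)
together with a linearly independent `r`-tuple inside it. -/
noncomputable def linIndepEquivSigma (F V : Type*) [Field F] [AddCommGroup V] [Module F V]
    [FiniteDimensional F V] (r : ℕ) :
    {s : Fin r → V // LinearIndependent F s} ≃
      Σ T : {T : Submodule F V // Module.finrank F T = r},
        {s : Fin r → T.1 // LinearIndependent F s} := by
  refine (Equiv.ofBijective
    (fun p : Σ T : {T : Submodule F V // Module.finrank F T = r},
        {s : Fin r → T.1 // LinearIndependent F s} =>
      (⟨fun j => (p.2.1 j : V), p.2.2.map' p.1.1.subtype (Submodule.ker_subtype _)⟩ :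
        {s : Fin r → V // LinearIndependent F s})) ⟨?_, ?_⟩).symm
  · -- The tuple determines its subspace: by dimension it spans it.
    have key : ∀ p : Σ T : {T : Submodule F V // Module.finrank F T = r},
        {s : Fin r → T.1 // LinearIndependent F s},
        Submodule.span F (Set.range fun j => (p.2.1 j : V)) = p.1.1 := by
      rintro ⟨⟨T, hT⟩, s, hs⟩
      refine Submodule.eq_of_le_of_finrank_eq ?_ ?_
      · rw [Submodule.span_le]
        rintro _ ⟨j, rfl⟩
        exact (s j).2
      · have h := hs.map' T.subtype (Submodule.ker_subtype _)
        have h2 := finrank_span_eq_card h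
        rw [Fintype.card_fin] at h2
        rw [hT]
        exact h2
    intro p p' h
    have h' : (fun j => (p.2.1 j : V)) = fun j => (p'.2.1 j : V) := congrArg Subtype.val h
    have hT : p.1 = p'.1 := by
      apply Subtype.ext
      rw [← key p, ← key p', h']
    obtain ⟨T, s, hs⟩ := p
    obtain ⟨T', s', hs'⟩ := p'
    obtain rfl : T = T' := hT
    have : s = s' := funext fun j => Subtype.ext (congrFun h' j)
    subst this
    rfl
  · rintro ⟨s, hs⟩
    refine ⟨⟨⟨Submodule.span F (Set.range s), ?_⟩,
      fun j => ⟨s j, Submodule.subset_span ⟨j, rfl⟩⟩, ?_⟩, rfl⟩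
    · simpa using finrank_span_eq_card hs
    · exact linearIndependent_span hs

/-- The identity `q^m - q^j = q^j (q^(m-j) - 1)` also holds for truncated subtraction when
`m < j`, both sides being `0`. -/
theorem prod_pow_sub_pow (q m r : ℕ) (hq : 0 < q) :
    ∏ j : Fin r, (q ^ m - q ^ (j : ℕ)) =
      (∏ j ∈ Finset.range r, q ^ j) * ∏ j ∈ Finset.range r, (q ^ (m - j) - 1) := by
  rw [← Finset.prod_mul_distrib, Fin.prod_univ_eq_prod_range (fun j => q ^ m - q ^ j)]
  refine Finset.prod_congr rfl fun j _ => ?_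
  rcases le_total j m with h | h
  · rw [Nat.mul_sub, ← pow_add, Nat.add_sub_cancel' h, mul_one]
  · rw [Nat.sub_eq_zero_of_le h, Nat.sub_eq_zero_of_le (Nat.pow_le_pow_right hq h)]
    simp

theorem card_finrank_eq (F V : Type*) [Field F] [Fintype F] [AddCommGroup V] [Module F V]
    [FiniteDimensional F V] (r : ℕ) (hr : r ≤ Module.finrank F V) :
    Nat.card {T : Submodule F V // Module.finrank F T = r} =
      gaussBinom (Fintype.card F) (Module.finrank F V) r := by
  classical
  have : Finite V := Module.finite_of_finite F
  have : Fintype V := Fintype.ofFinite V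
  have : Fintype {T : Submodule F V // Module.finrank F T = r} := Fintype.ofFinite _
  set q := Fintype.card F with hq
  have hq1 : 1 < q := Fintype.one_lt_card
  have h := Nat.card_congr (linIndepEquivSigma F V r)
  have hfib : ∀ T : {T : Submodule F V // Module.finrank F T = r},
      Nat.card {s : Fin r → T.1 // LinearIndependent F s} =
        ∏ j : Fin r, (q ^ r - q ^ (j : ℕ)) := by
    intro T
    have : Fintype T.1 := Fintype.ofFinite _
    rw [card_linearIndependent T.2.ge, T.2]
  rw [card_linearIndependent hr, Nat.card_sigma, Finset.sum_congr rfl fun T _ => hfib T,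
    Finset.sum_const, smul_eq_mul, Finset.card_univ,
    ← Nat.card_eq_fintype_card (α := {T : Submodule F V // Module.finrank F T = r}), ← hq,
    prod_pow_sub_pow q _ r (by omega), prod_pow_sub_pow q r r (by omega), mul_left_comm] at h
  have hpos : 0 < ∏ j ∈ Finset.range r, q ^ j :=
    Finset.prod_pos fun j _ => pow_pos (by omega) _
  have hpos' : 0 < ∏ j ∈ Finset.range r, (q ^ (r - j) - 1) := by
    refine Finset.prod_pos fun j hj => ?_
    have hj' := Finset.mem_range.mp hj
    have := Nat.one_lt_pow (n := r - j) (by omega) hq1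
    omega
  rw [gaussBinom, Nat.eq_of_mul_eq_mul_left hpos h, Nat.mul_div_cancel _ hpos']

theorem finrank_map_mkQ_add {F V : Type*} [Field F] [AddCommGroup V] [Module F V]
    [FiniteDimensional F V] {I T : Submodule F V} (h : I ≤ T) :
    Module.finrank F (T.map I.mkQ) + Module.finrank F I = Module.finrank F T := by
  have h1 := LinearMap.finrank_range_add_finrank_ker (I.mkQ.domRestrict T)
  rw [LinearMap.range_domRestrict, LinearMap.ker_domRestrict, Submodule.ker_mkQ] at h1
  rw [← h1]
  congr 1
  exact (Submodule.comapSubtypeEquivOfLe h).finrank_eq.symm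

/-- The `t`-dimensional subspaces between `I` and `B` correspond to the subspaces of dimension
`t - dim I` of `B / I`, realised here as the image of `B` in `V / I`. -/
theorem card_between {F V : Type*} [Field F] [Fintype F] [AddCommGroup V] [Module F V]
    [FiniteDimensional F V] {I B : Submodule F V} (h : I ≤ B) {t : ℕ}
    (hIt : Module.finrank F I ≤ t) (htB : t ≤ Module.finrank F B) :
    Nat.card {T : Submodule F V // I ≤ T ∧ T ≤ B ∧ Module.finrank F T = t} =
      gaussBinom (Fintype.card F) (Module.finrank F B - Module.finrank F I)
        (t - Module.finrank F I) := by
  have hB := finrank_map_mkQ_add h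
  have hdim : Module.finrank F (B.map I.mkQ) = Module.finrank F B - Module.finrank F I := by
    omega
  rw [← hdim, ← card_finrank_eq F (B.map I.mkQ) _ (by omega)]
  have hcm : ∀ T : Submodule F V, I ≤ T → (T.map I.mkQ).comap I.mkQ = T := fun T hT => by
    rw [Submodule.comap_map_mkQ, sup_eq_right.mpr hT]
  have hmc : ∀ S : Submodule F (V ⧸ I), (S.comap I.mkQ).map I.mkQ = S := fun S =>
    Submodule.map_comap_eq_of_surjective I.mkQ_surjective S
  have hfs : ∀ S : Submodule F (B.map I.mkQ),
      Module.finrank F (S.map (B.map I.mkQ).subtype) = Module.finrank F S := fun S =>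
    ((B.map I.mkQ).equivSubtypeMap S).finrank_eq.symm
  symm
  refine Nat.card_congr (Equiv.ofBijective
    (fun S => ⟨(S.1.map (B.map I.mkQ).subtype).comap I.mkQ, ?_, ?_, ?_⟩) ⟨?_, ?_⟩)
  · exact Submodule.le_comap_mkQ I _
  · exact (Submodule.comap_mono (Submodule.map_subtype_le _ _)).trans (hcm B h).le
  · rw [← finrank_map_mkQ_add (Submodule.le_comap_mkQ I _), hmc, hfs, S.2]
    omega
  · intro S S' e
    have e' := congrArg Subtype.val e
    exact Subtype.ext (Submodule.map_injective_of_injective (B.map I.mkQ).injective_subtype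
      (Submodule.comap_injective_of_surjective I.mkQ_surjective e'))
  · rintro ⟨T, hIT, hTB, hT⟩
    have hle : T.map I.mkQ ≤ B.map I.mkQ := Submodule.map_mono hTB
    have hms : ((T.map I.mkQ).comap (B.map I.mkQ).subtype).map (B.map I.mkQ).subtype
        = T.map I.mkQ := by
      rw [Submodule.map_comap_subtype, inf_eq_right.mpr hle]
    refine ⟨⟨(T.map I.mkQ).comap (B.map I.mkQ).subtype, ?_⟩, Subtype.ext ?_⟩
    · have := finrank_map_mkQ_add hIT
      rw [← hfs, hms]
      omega
    · change Submodule.comap _ (Submodule.map _ _) = T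
      rw [hms, hcm T hIT]

theorem stmt_1 (F : Type*) [Field F] [Fintype F] (q : ℕ) (hq : Fintype.card F = q)
    (t k n : ℕ) (ht : 0 < t) (htk : t < k) (hkn : k < n)
    (hD : ∃ D : Set (Submodule F (Fin n → F)), IsSteiner F t k n D) :
    ∀ i : ℕ, i ≤ t - 1 →
      gaussBinom q (k - i) (t - i) ∣ gaussBinom q (n - i) (t - i) := by
  classical
  intro i hi
  subst hq
  obtain ⟨D, hk, hex⟩ := hD
  obtain ⟨I, hI⟩ : ∃ I : Submodule F (Fin n → F), Module.finrank F I = i := by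
    obtain ⟨s, hs⟩ := exists_linearIndependent_of_le_finrank
      (R := F) (M := Fin n → F) (n := i) (by rw [Module.finrank_fin_fun]; omega)
    exact ⟨Submodule.span F (Set.range s), by simpa using finrank_span_eq_card hs⟩
  have hn : Module.finrank F (⊤ : Submodule F (Fin n → F)) = n := by
    rw [finrank_top, Module.finrank_fin_fun]
  have htop := card_between (F := F) (le_top : I ≤ ⊤) (t := t) (by omega) (by omega)
  rw [hn, hI] at htop
  -- Sort the `t`-dimensional subspaces above `I` by the unique block containing them.
  choose b hb hbu using hex
  let e : {T : Submodule F (Fin n → F) // I ≤ T ∧ T ≤ ⊤ ∧ Module.finrank F T = t} ≃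
      Σ B : {B : Submodule F (Fin n → F) // B ∈ D ∧ I ≤ B},
        {T : Submodule F (Fin n → F) // I ≤ T ∧ T ≤ B.1 ∧ Module.finrank F T = t} :=
    { toFun := fun T => ⟨⟨b T.1 T.2.2.2, (hb T.1 T.2.2.2).1, T.2.1.trans (hb T.1 T.2.2.2).2⟩,
        T.1, T.2.1, (hb T.1 T.2.2.2).2, T.2.2.2⟩
      invFun := fun p => ⟨p.2.1, p.2.2.1, le_top, p.2.2.2.2⟩
      left_inv := fun _ => rfl
      right_inv := by
        rintro ⟨⟨B, hBD, hIB⟩, T, hIT, hTB, hT⟩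
        obtain rfl : B = b T hT := hbu T hT B ⟨hBD, hTB⟩
        rfl }
  have : Fintype {B : Submodule F (Fin n → F) // B ∈ D ∧ I ≤ B} := Fintype.ofFinite _
  have hfib : ∀ B : {B : Submodule F (Fin n → F) // B ∈ D ∧ I ≤ B},
      Nat.card {T : Submodule F (Fin n → F) // I ≤ T ∧ T ≤ B.1 ∧ Module.finrank F T = t} =
        gaussBinom (Fintype.card F) (k - i) (t - i) := by
    intro B
    have hB := hk B.1 B.2.1
    rw [card_between B.2.2 (by omega) (by omega), hB, hI]
  rw [← htop, Nat.card_congr e, Nat.card_sigma, Finset.sum_congr rfl fun B _ => hfib B,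
    Finset.sum_const, smul_eq_mul]
  exact dvd_mul_left _ _
end

section
/- Let q be a prime power and let D be a q-Steiner system S_q(t,k,n) with 1 ≤ t < k < n, and let e_n be the standard basis vector with a one in the last coordinate. Let T be a t-dimensional subspace of F_q^{n−1} such that T ⊆ π_{n−1}(Z) for some block Z ∈ D with e_n ∈ Z. Then for every block Z' ∈ D with e_n ∉ Z', T is not contained in π_{n−1}(Z'). -/
/-- The kernel of the projection is contained in the line spanned by the last basis vector. -/
lemma eq_smul_of_proj_eq_zero {F : Type*} [Field F] {n : ℕ} {x : Fin (n + 1) → F}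
    (hx : proj F n (n + 1) (Nat.le_succ n) x = 0) :
    x = x (Fin.last n) • Pi.single (Fin.last n) (1 : F) := by
  funext i
  refine Fin.lastCases ?_ (fun j => ?_) i
  · simp
  · have h : x j.castSucc = 0 := congrFun hx j
    simp [h, (Fin.castSucc_lt_last j).ne]

theorem stmt_10 (F : Type*) [Field F] [Fintype F] (t k n : ℕ)
    (ht : 1 ≤ t) (htk : t < k) (hkn : k < n + 1)
    (D : Set (Submodule F (Fin (n + 1) → F))) (hD : IsSteiner F t k (n + 1) D)
    (T : Submodule F (Fin n → F)) (hT : Module.finrank F T = t)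
    (hcov : ∃ Z ∈ D, Pi.single (Fin.last n) (1 : F) ∈ Z ∧
      T ≤ Z.map (proj F n (n + 1) (Nat.le_succ n))) :
    ∀ Z' ∈ D, Pi.single (Fin.last n) (1 : F) ∉ Z' →
      ¬ T ≤ Z'.map (proj F n (n + 1) (Nat.le_succ n)) := by
  obtain ⟨Z, hZD, heZ, hTZ⟩ := hcov
  intro Z' hZ'D heZ' hTZ'
  set π := proj F n (n + 1) (Nat.le_succ n) with hπ
  set T' : Submodule F (Fin (n + 1) → F) := Z' ⊓ T.comap π with hT'
  have hmap : T'.map π = T := by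
    apply le_antisymm
    · rintro _ ⟨x, hx, rfl⟩
      exact hx.2
    · intro y hy
      obtain ⟨x, hx, rfl⟩ := hTZ' hy
      exact ⟨x, ⟨hx, hy⟩, rfl⟩
  have hinj : Function.Injective (π.domRestrict T') := by
    rw [injective_iff_map_eq_zero]
    rintro ⟨x, hx⟩ h0
    have hxe := eq_smul_of_proj_eq_zero (x := x) h0
    have hc : x (Fin.last n) = 0 := by
      by_contra hc
      apply heZ'
      have hxZ' : x ∈ Z' := hx.1
      rw [hxe] at hxZ'
      exact (Submodule.smul_mem_iff _ hc).1 hxZ'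
    rw [hc, zero_smul] at hxe
    exact Subtype.ext hxe
  have hdim : Module.finrank F T' = t := by
    rw [← LinearMap.finrank_range_of_inj hinj, LinearMap.range_domRestrict, hmap, hT]
  have hT'Z : T' ≤ Z := by
    intro x hx
    obtain ⟨z, hz, hzx⟩ := hTZ hx.2
    have h0 : π (x - z) = 0 := by rw [map_sub, hzx, sub_self]
    have hd : x - z ∈ Z := by
      rw [eq_smul_of_proj_eq_zero h0]
      exact Z.smul_mem _ heZ
    simpa using Z.add_mem hd hz
  have hZZ' : Z = Z' := (hD.2 T' hdim).unique ⟨hZD, hT'Z⟩ ⟨hZ'D, inf_le_left⟩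
  exact heZ' (hZZ' ▸ heZ)
end

section
/- Let q be a prime power and let D be a q-Steiner system S_q(t,k,n) with 1 ≤ t < k < n, and let e_n be the standard basis vector with a one in the last coordinate. Let T be a t-dimensional subspace of F_q^{n−1} that is not contained in π_{n−1}(Z) for any block Z ∈ D with e_n ∈ Z. Then the number of blocks Z' ∈ D with e_n ∉ Z' and T ⊆ π_{n−1}(Z') is exactly q^t. -/
/-- The embedding `x ↦ (x, φ x)` of `T` into `F^(n+1)`, whose range is the graph of `φ`. -/
def graphLift {F : Type*} [Field F] {n : ℕ} (T : Submodule F (Fin n → F)) (φ : T →ₗ[F] F) :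
    T →ₗ[F] (Fin (n + 1) → F) :=
  LinearMap.pi (Fin.lastCases φ (fun i => LinearMap.proj i ∘ₗ T.subtype))

section

variable {F : Type*} [Field F] {n : ℕ} (T : Submodule F (Fin n → F))

theorem graphLift_last (φ : T →ₗ[F] F) (x : T) : graphLift T φ x (Fin.last n) = φ x := by
  simp [graphLift]

theorem graphLift_castSucc (φ : T →ₗ[F] F) (x : T) (i : Fin n) :
    graphLift T φ x i.castSucc = x.1 i := by
  simp [graphLift]

theorem proj_apply_castSucc (v : Fin (n + 1) → F) (i : Fin n) :
    proj F n (n + 1) (Nat.le_succ n) v i = v i.castSucc := rfl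

theorem proj_graphLift (φ : T →ₗ[F] F) (x : T) :
    proj F n (n + 1) (Nat.le_succ n) (graphLift T φ x) = x := by
  ext i
  rw [proj_apply_castSucc, graphLift_castSucc]

theorem finrank_range_graphLift (φ : T →ₗ[F] F) :
    Module.finrank F (LinearMap.range (graphLift T φ)) = Module.finrank F T := by
  refine LinearMap.finrank_range_of_inj fun x y h => Subtype.ext ?_
  rw [← proj_graphLift T φ x, h, proj_graphLift]

theorem le_map_proj_of_range_graphLift_le {φ : T →ₗ[F] F} {Z : Submodule F (Fin (n + 1) → F)}
    (h : LinearMap.range (graphLift T φ) ≤ Z) :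
    T ≤ Z.map (proj F n (n + 1) (Nat.le_succ n)) := fun x hx =>
  ⟨graphLift T φ ⟨x, hx⟩, h ⟨_, rfl⟩, proj_graphLift T φ ⟨x, hx⟩⟩

/-- A subspace avoiding the last unit vector contains at most one graph over `T`, because
`(x, φ x) - (x, ψ x)` is a multiple of that vector. -/
theorem eq_of_range_graphLift_le {φ ψ : T →ₗ[F] F} {Z : Submodule F (Fin (n + 1) → F)}
    (hZ : Pi.single (Fin.last n) (1 : F) ∉ Z) (hφ : LinearMap.range (graphLift T φ) ≤ Z)
    (hψ : LinearMap.range (graphLift T ψ) ≤ Z) : φ = ψ := by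
  ext x
  by_contra hne
  have hmem : graphLift T φ x - graphLift T ψ x ∈ Z := Z.sub_mem (hφ ⟨x, rfl⟩) (hψ ⟨x, rfl⟩)
  have heq : graphLift T φ x - graphLift T ψ x
      = (φ x - ψ x) • (Pi.single (Fin.last n) (1 : F) : Fin (n + 1) → F) := by
    ext i
    refine Fin.lastCases ?_ (fun i => ?_) i
    · simp [graphLift_last]
    · simp [graphLift_castSucc, (Fin.castSucc_lt_last i).ne]
  rw [heq] at hmem
  exact hZ ((Z.smul_mem_iff (sub_ne_zero.mpr hne)).mp hmem)

theorem exists_range_graphLift_le {Z : Submodule F (Fin (n + 1) → F)}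
    (h : T ≤ Z.map (proj F n (n + 1) (Nat.le_succ n))) :
    ∃ φ : T →ₗ[F] F, LinearMap.range (graphLift T φ) ≤ Z := by
  obtain ⟨s, hs⟩ := Module.projective_lifting_property
    ((proj F n (n + 1) (Nat.le_succ n)).submoduleMap Z) (Submodule.inclusion h)
    (LinearMap.submoduleMap_surjective _ _)
  refine ⟨LinearMap.proj (Fin.last n) ∘ₗ Z.subtype ∘ₗ s, ?_⟩
  rintro _ ⟨x, rfl⟩
  have hx : proj F n (n + 1) (Nat.le_succ n) (s x) = x :=
    congrArg Subtype.val (LinearMap.congr_fun hs x)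
  convert (s x).2 using 1
  ext i
  refine Fin.lastCases ?_ (fun i => ?_) i
  · simp [graphLift_last]
  · rw [graphLift_castSucc, ← hx, proj_apply_castSucc]

theorem natCard_functionals [Fintype F] :
    Nat.card (T →ₗ[F] F) = Fintype.card F ^ Module.finrank F T := by
  rw [Module.natCard_eq_pow_finrank (K := F), Nat.card_eq_fintype_card,
    Module.finrank_linearMap_self]

end

theorem stmt_11 (F : Type*) [Field F] [Fintype F] (q : ℕ) (hq : Fintype.card F = q)
    (t k n : ℕ) (ht : 1 ≤ t) (htk : t < k) (hkn : k < n + 1)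
    (D : Set (Submodule F (Fin (n + 1) → F))) (hD : IsSteiner F t k (n + 1) D)
    (T : Submodule F (Fin n → F)) (hT : Module.finrank F T = t)
    (hncov : ∀ Z ∈ D, Pi.single (Fin.last n) (1 : F) ∈ Z →
      ¬ T ≤ Z.map (proj F n (n + 1) (Nat.le_succ n))) :
    {Z' | Z' ∈ D ∧ Pi.single (Fin.last n) (1 : F) ∉ Z' ∧
        T ≤ Z'.map (proj F n (n + 1) (Nat.le_succ n))}.ncard = q ^ t := by
  choose B hB hBuniq using fun φ : T →ₗ[F] F =>
    hD.2 (LinearMap.range (graphLift T φ)) ((finrank_range_graphLift T φ).trans hT)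
  have hBe : ∀ φ, Pi.single (Fin.last n) (1 : F) ∉ B φ := fun φ he =>
    hncov _ (hB φ).1 he (le_map_proj_of_range_graphLift_le T (hB φ).2)
  have hinj : Function.Injective B := fun φ ψ h =>
    eq_of_range_graphLift_le T (hBe φ) (hB φ).2 (h ▸ (hB ψ).2)
  have hrange : {Z' | Z' ∈ D ∧ Pi.single (Fin.last n) (1 : F) ∉ Z' ∧
      T ≤ Z'.map (proj F n (n + 1) (Nat.le_succ n))} = Set.range B := by
    ext Z
    constructor
    · rintro ⟨hZ, -, hTZ⟩
      obtain ⟨φ, hφ⟩ := exists_range_graphLift_le T hTZ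
      exact ⟨φ, (hBuniq φ Z ⟨hZ, hφ⟩).symm⟩
    · rintro ⟨φ, rfl⟩
      exact ⟨(hB φ).1, hBe φ, le_map_proj_of_range_graphLift_le T (hB φ).2⟩
  rw [hrange, ← Nat.card_coe_set_eq, Nat.card_range_of_injective hinj, natCard_functionals,
    hT, hq]
end

section
/- Let q be a prime power, let 0 < m < n, let 0 ≤ s ≤ t with t − s ≤ n − m and t ≤ n, and let X be an s-dimensional subspace of F_q^m. Then the number of t-dimensional subspaces Y of F_q^n with π_m(Y) = X is exactly q^{s(n−m−t+s)} · [n−m choose t−s]_q. -/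
/-- The pairs `(v, u)` where `v` is a linearly independent `d`-tuple in `Y ⊓ ker π` and `u` lifts
the family `b` to `Y` along `π`. -/
def liftTuples {F V W : Type*} [Field F] [AddCommGroup V] [Module F V] [AddCommGroup W]
    [Module F W] (π : V →ₗ[F] W) (d : ℕ) {s : ℕ} (b : Fin s → W) (Y : Submodule F V) :
    Set ((Fin d → V) × (Fin s → V)) :=
  {v | LinearIndependent F v ∧ ∀ i, v i ∈ Y ⊓ LinearMap.ker π} ×ˢ
    Set.univ.pi fun i => {u | u ∈ Y ∧ π u = b i}

section Count

variable {F V W : Type*} [Field F] [AddCommGroup V] [Module F V]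
  [FiniteDimensional F V] [AddCommGroup W] [Module F W]

lemma finrank_map_add_finrank_inf_ker (π : V →ₗ[F] W) (Y : Submodule F V) :
    Module.finrank F (Y.map π) + Module.finrank F ↥(Y ⊓ LinearMap.ker π) =
      Module.finrank F Y := by
  have h := LinearMap.finrank_range_add_finrank_ker (π.domRestrict Y)
  rw [LinearMap.range_domRestrict, LinearMap.ker_domRestrict] at h
  rw [← h, ← Submodule.map_comap_subtype, Submodule.finrank_map_subtype_eq]

/-- The span of a pair `(v, u)` of `liftTuples` is the only subspace of dimension `d + s` over `X`
containing both tuples. -/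
lemma existsUnique_of_mem_liftTuples (π : V →ₗ[F] W) {d s : ℕ} (X : Submodule F W)
    (b : Fin s → W) (hb : LinearIndependent F b) (hX : Submodule.span F (Set.range b) = X)
    (p : (Fin d → V) × (Fin s → V)) (hp : p ∈ liftTuples π d b ⊤) :
    ∃! Y : Submodule F V, (Module.finrank F Y = d + s ∧ Y.map π = X) ∧ p ∈ liftTuples π d b Y := by
  obtain ⟨v, u⟩ := p
  obtain ⟨⟨hv, hvk⟩, hu⟩ := hp
  simp only [Submodule.mem_inf, Submodule.mem_top, true_and, LinearMap.mem_ker, Set.mem_univ_pi,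
    Set.mem_ofPred_eq] at hv hvk hu
  let Y₀ := Submodule.span F (Set.range (Sum.elim v u))
  have hvY : ∀ i, v i ∈ Y₀ := fun i => Submodule.subset_span ⟨Sum.inl i, rfl⟩
  have huY : ∀ i, u i ∈ Y₀ := fun i => Submodule.subset_span ⟨Sum.inr i, rfl⟩
  have hmap : Y₀.map π = X := by
    rw [Submodule.map_span, ← hX]
    apply le_antisymm <;> rw [Submodule.span_le]
    · rintro _ ⟨_, ⟨i | i, rfl⟩, rfl⟩
      · simp [hvk]
      · exact Submodule.subset_span ⟨i, by simp [hu]⟩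
    · rintro _ ⟨i, rfl⟩
      exact Submodule.subset_span ⟨u i, ⟨Sum.inr i, rfl⟩, hu i⟩
  have hXs : Module.finrank F X = s := by
    rw [← hX, finrank_span_eq_card hb, Fintype.card_fin]
  have hfin : Module.finrank F Y₀ = d + s := by
    apply le_antisymm
    · have := finrank_range_le_card (R := F) (Sum.elim v u)
      simpa [Set.finrank] using this
    · have h1 := finrank_map_add_finrank_inf_ker π Y₀
      have h2 : Submodule.span F (Set.range v) ≤ Y₀ ⊓ LinearMap.ker π := by
        rw [Submodule.span_le]
        rintro _ ⟨i, rfl⟩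
        exact ⟨hvY i, hvk i⟩
      have h3 := Submodule.finrank_mono h2
      rw [finrank_span_eq_card hv, Fintype.card_fin] at h3
      rw [hmap, hXs] at h1
      omega
  refine ⟨Y₀, ⟨⟨hfin, hmap⟩, ⟨hv, fun i => ⟨hvY i, hvk i⟩⟩, fun i _ => ⟨huY i, hu i⟩⟩, ?_⟩
  rintro Y ⟨⟨hY, -⟩, ⟨-, hvY'⟩, huY'⟩
  refine (Submodule.eq_of_le_of_finrank_eq ?_ (hfin.trans hY.symm)).symm
  rw [Submodule.span_le]
  rintro _ ⟨i | i, rfl⟩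
  · exact (hvY' i).1
  · exact (huY' i trivial).1

variable [Fintype F]

lemma ncard_independent_tuples (K : Submodule F V) {d e : ℕ} (he : Module.finrank F K = e)
    (hd : d ≤ e) :
    {v : Fin d → V | LinearIndependent F v ∧ ∀ i, v i ∈ K}.ncard =
      ∏ i ∈ Finset.range d, (Fintype.card F ^ e - Fintype.card F ^ i) := by
  have : Finite V := Module.finite_of_finite F
  have := Fintype.ofFinite K
  have h := card_linearIndependent (K := F) (V := K) (k := d) (he ▸ hd)
  rw [he, Fin.prod_univ_eq_prod_range (fun i => Fintype.card F ^ e - Fintype.card F ^ i)] at h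
  rw [← h, ← Nat.card_coe_set_eq]
  refine Nat.card_congr ⟨fun v => ⟨fun i => ⟨v.1 i, v.2.2 i⟩, ?_⟩,
    fun v => ⟨fun i => v.1 i, ?_, fun i => (v.1 i).2⟩, fun _ => rfl, fun _ => rfl⟩
  · exact LinearIndependent.of_comp K.subtype v.2.1
  · exact v.2.map' K.subtype K.ker_subtype

/-- A nonempty fibre of `π` on `Y` is a coset of `Y ⊓ ker π`. -/
lemma ncard_fibre (π : V →ₗ[F] W) (Y : Submodule F V) {e : ℕ}
    (he : Module.finrank F ↥(Y ⊓ LinearMap.ker π) = e) {w : W} (hw : w ∈ Y.map π) :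
    {u | u ∈ Y ∧ π u = w}.ncard = Fintype.card F ^ e := by
  obtain ⟨u₀, hu₀, rfl⟩ := hw
  have : Finite V := Module.finite_of_finite F
  have := Fintype.ofFinite ↥(Y ⊓ LinearMap.ker π)
  rw [← he, ← Module.card_eq_pow_finrank (K := F) (V := ↥(Y ⊓ LinearMap.ker π)),
    ← Nat.card_eq_fintype_card, ← Nat.card_coe_set_eq]
  refine Nat.card_congr ⟨fun u => ⟨u.1 - u₀, Y.sub_mem u.2.1 hu₀, by simp [u.2.2]⟩,
    fun k => ⟨k.1 + u₀, Y.add_mem k.2.1 hu₀, ?_⟩, fun _ => by simp, fun _ => by simp⟩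
  have : π k.1 = 0 := k.2.2
  simp [this]

lemma ncard_liftTuples (π : V →ₗ[F] W) {d e s : ℕ} (b : Fin s → W) (Y : Submodule F V)
    (he : Module.finrank F ↥(Y ⊓ LinearMap.ker π) = e) (hd : d ≤ e) (hb : ∀ i, b i ∈ Y.map π) :
    (liftTuples π d b Y).ncard =
      (∏ i ∈ Finset.range d, (Fintype.card F ^ e - Fintype.card F ^ i)) *
        (Fintype.card F ^ e) ^ s := by
  have h : (Set.univ.pi fun i => {u | u ∈ Y ∧ π u = b i}).ncard = (Fintype.card F ^ e) ^ s := by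
    rw [← Nat.card_coe_set_eq, Nat.card_congr (Equiv.Set.univPi _), Nat.card_pi]
    simp only [Nat.card_coe_set_eq, ncard_fibre π Y he (hb _)]
    simp
  rw [liftTuples, Set.ncard_prod, ncard_independent_tuples _ he hd, h]

/-- Double counting of the pairs `(Y, p)` with `Y` a `(d + s)`-dimensional subspace over `X` and
`p ∈ liftTuples π d b Y`, where `b` is a basis of `X`. -/
lemma ncard_subspaces_mul (π : V →ₗ[F] W) {d e s : ℕ} (X : Submodule F W)
    (hX : Module.finrank F X = s) (hXr : X ≤ LinearMap.range π)
    (he : Module.finrank F (LinearMap.ker π) = e) (hd : d ≤ e) :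
    {Y : Submodule F V | Module.finrank F Y = d + s ∧ Y.map π = X}.ncard *
        ((∏ i ∈ Finset.range d, (Fintype.card F ^ d - Fintype.card F ^ i)) *
          (Fintype.card F ^ d) ^ s) =
      (∏ i ∈ Finset.range d, (Fintype.card F ^ e - Fintype.card F ^ i)) *
        (Fintype.card F ^ e) ^ s := by
  classical
  have : Finite V := Module.finite_of_finite F
  have : Finite X := Finite.Set.subset (Set.range π) hXr
  have : FiniteDimensional F X := Module.Finite.of_finite
  let B := Module.finBasisOfFinrankEq F X hX
  let b : Fin s → W := fun i => B i
  have hbi : LinearIndependent F b := B.linearIndependent.map' X.subtype X.ker_subtype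
  have hbX : Submodule.span F (Set.range b) = X := by
    have : Set.range b = X.subtype '' Set.range B := by
      rw [← Set.range_comp]; rfl
    rw [this, ← Submodule.map_span, B.span_eq, Submodule.map_top, Submodule.range_subtype]
  have key := existsUnique_of_mem_liftTuples (d := d) π X b hbi hbX
  set S := {Y : Submodule F V | Module.finrank F Y = d + s ∧ Y.map π = X} with hS
  have hmono : ∀ Y, liftTuples π d b Y ⊆ liftTuples π d b ⊤ := fun Y p hp =>
    ⟨⟨hp.1.1, fun i => ⟨trivial, (hp.1.2 i).2⟩⟩, fun i hi => ⟨trivial, (hp.2 i hi).2⟩⟩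
  have hcard : ∀ Y : S, Nat.card (liftTuples π d b Y.1) =
      (∏ i ∈ Finset.range d, (Fintype.card F ^ d - Fintype.card F ^ i)) *
        (Fintype.card F ^ d) ^ s := by
    rintro ⟨Y, hY, hYX⟩
    rw [Nat.card_coe_set_eq]
    refine ncard_liftTuples π b Y ?_ le_rfl fun i => hYX ▸ (B i).2
    have := finrank_map_add_finrank_inf_ker π Y
    rw [hYX, hX] at this
    omega
  have hbij : Function.Bijective (fun x : Σ Y : S, liftTuples π d b Y.1 =>
      (⟨x.2.1, hmono _ x.2.2⟩ : liftTuples π d b ⊤)) := by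
    constructor
    · rintro ⟨Y, p, hp⟩ ⟨Y', p', hp'⟩ h
      obtain rfl : p = p' := congrArg Subtype.val h
      obtain rfl : Y = Y' := Subtype.ext ((key p (hmono _ hp)).unique ⟨Y.2, hp⟩ ⟨Y'.2, hp'⟩)
      rfl
    · rintro ⟨p, hp⟩
      obtain ⟨Y, ⟨hY, hpY⟩, -⟩ := key p hp
      exact ⟨⟨⟨Y, hY⟩, ⟨p, hpY⟩⟩, rfl⟩
  have := Fintype.ofFinite S
  rw [← ncard_liftTuples π b ⊤ (by rwa [top_inf_eq]) hd
    (fun i => by rw [Submodule.map_top]; exact hXr (B i).2), ← Nat.card_coe_set_eq,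
    ← Nat.card_coe_set_eq, ← Nat.card_congr (Equiv.ofBijective _ hbij), Nat.card_sigma]
  simp [hcard]

end Count

/-- The power `q ^ (0 + 1 + ⋯ + (d - 1))` factored out here occurs in both the numerator and the
denominator of the Gaussian binomial. -/
lemma prod_pow_sub_pow_s13 (q : ℕ) {d e : ℕ} (hd : d ≤ e) :
    ∏ i ∈ Finset.range d, (q ^ e - q ^ i) =
      (∏ i ∈ Finset.range d, q ^ i) * ∏ i ∈ Finset.range d, (q ^ (e - i) - 1) := by
  rw [← Finset.prod_mul_distrib]
  refine Finset.prod_congr rfl fun i hi => ?_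
  have := Finset.mem_range.1 hi
  rw [Nat.mul_sub, ← pow_add, mul_one, Nat.add_sub_cancel' (by omega)]

lemma ncard_subspaces_mul_prod {F V W : Type*} [Field F] [Fintype F] [AddCommGroup V] [Module F V]
    [FiniteDimensional F V] [AddCommGroup W] [Module F W] (π : V →ₗ[F] W) {d e s : ℕ}
    (X : Submodule F W) (hX : Module.finrank F X = s) (hXr : X ≤ LinearMap.range π)
    (he : Module.finrank F (LinearMap.ker π) = e) (hd : d ≤ e) :
    {Y : Submodule F V | Module.finrank F Y = d + s ∧ Y.map π = X}.ncard *
        ∏ i ∈ Finset.range d, (Fintype.card F ^ (d - i) - 1) =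
      Fintype.card F ^ (s * (e - d)) * ∏ i ∈ Finset.range d, (Fintype.card F ^ (e - i) - 1) := by
  have h := ncard_subspaces_mul π X hX hXr he hd
  rw [prod_pow_sub_pow_s13 _ le_rfl, prod_pow_sub_pow_s13 _ hd] at h
  have hq : 0 < Fintype.card F := Fintype.card_pos
  have hsplit : (Fintype.card F ^ e) ^ s =
      Fintype.card F ^ (s * (e - d)) * (Fintype.card F ^ d) ^ s := by
    rw [← pow_mul, ← pow_mul, ← pow_add]
    congr 1
    obtain ⟨c, rfl⟩ := Nat.exists_eq_add_of_le hd
    rw [Nat.add_sub_cancel_left]; ring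
  rw [hsplit] at h
  have hpos : 0 < (∏ i ∈ Finset.range d, Fintype.card F ^ i) * (Fintype.card F ^ d) ^ s :=
    Nat.mul_pos (Finset.prod_pos fun i _ => pow_pos hq i) (by positivity)
  refine Nat.eq_of_mul_eq_mul_right hpos ?_
  linear_combination h

/-- The denominator of the Gaussian binomial divides its numerator. The quotient is the number of
`d`-dimensional subspaces of `F ^ e`, which is the count over `X = ⊥` along the zero map. -/
lemma gaussBinom_mul_prod (F : Type*) [Field F] [Fintype F] {d e : ℕ} (hd : d ≤ e) :
    gaussBinom (Fintype.card F) e d * ∏ i ∈ Finset.range d, (Fintype.card F ^ (d - i) - 1) =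
      ∏ i ∈ Finset.range d, (Fintype.card F ^ (e - i) - 1) := by
  have h := ncard_subspaces_mul_prod (F := F) (V := Fin e → F) (W := F) 0 (d := d) (e := e) (s := 0)
    ⊥ (by simp) bot_le
    (by rw [LinearMap.ker_zero, finrank_top, Module.finrank_fin_fun]) hd
  rw [zero_mul, pow_zero, one_mul] at h
  exact Nat.div_mul_cancel (Dvd.intro_left _ h)

theorem stmt_13 (F : Type*) [Field F] [Fintype F] (q : ℕ) (hq : Fintype.card F = q)
    (m n s t : ℕ) (hm : 0 < m) (hmn : m < n) (hst : s ≤ t)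
    (hts : t - s ≤ n - m) (htn : t ≤ n)
    (X : Submodule F (Fin m → F)) (hX : Module.finrank F X = s) :
    {Y : Submodule F (Fin n → F) |
        Module.finrank F Y = t ∧ Y.map (proj F m n hmn.le) = X}.ncard =
      q ^ (s * ((n - m) - (t - s))) * gaussBinom q (n - m) (t - s) := by
  subst hq
  have hrange : LinearMap.range (proj F m n hmn.le) = ⊤ := LinearMap.range_eq_top.2
    (LinearMap.funLeft_surjective_of_injective F F _ (Fin.castLE_injective hmn.le))
  have hker : Module.finrank F (LinearMap.ker (proj F m n hmn.le)) = n - m := by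
    have := LinearMap.finrank_range_add_finrank_ker (proj F m n hmn.le)
    rw [hrange, finrank_top, Module.finrank_fin_fun, Module.finrank_fin_fun] at this
    omega
  have h := ncard_subspaces_mul_prod (proj F m n hmn.le) X hX (hrange ▸ le_top) hker hts
  rw [Nat.sub_add_cancel hst, ← gaussBinom_mul_prod F hts, ← mul_assoc] at h
  refine Nat.eq_of_mul_eq_mul_right (Finset.prod_pos fun i hi => ?_) h
  have := Finset.mem_range.1 hi
  exact Nat.sub_pos_of_lt (Nat.one_lt_pow (by omega) Fintype.one_lt_card)
end

section
/- Let q be a prime power, let D be a q-Steiner system S_q(2,3,7), and let Z ∈ D be a block. Then the number of blocks X ∈ D with X ≠ Z and X ∩ Z ≠ {0} is exactly q^2 (q^2+1)(q^2+q+1). -/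
/-- The defining property of a Steiner system with `t = 2`, in terms of a basis of the plane. -/
lemma existsUnique_block {F : Type*} [Field F] {k n : ℕ} {D : Set (Submodule F (Fin n → F))}
    (hD : IsSteiner F 2 k n D) {z v : Fin n → F} (h : LinearIndependent F ![z, v]) :
    ∃! B, B ∈ D ∧ z ∈ B ∧ v ∈ B := by
  have h2 : Module.finrank F (Submodule.span F (Set.range ![z, v])) = 2 := by
    simpa using finrank_span_eq_card h
  simpa [Submodule.span_le, Set.insert_subset_iff, and_comm (a := z ∈ _)] using hD.2 _ h2

/-- Distinct blocks share no plane, so a nontrivial intersection is a line. -/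
lemma finrank_inf_eq_one {F : Type*} [Field F] {k n : ℕ} {D : Set (Submodule F (Fin n → F))}
    (hD : IsSteiner F 2 k n D) {X Z : Submodule F (Fin n → F)} (hX : X ∈ D) (hZ : Z ∈ D)
    (hne : X ≠ Z) (hXZ : X ⊓ Z ≠ ⊥) : Module.finrank F (X ⊓ Z : Submodule F (Fin n → F)) = 1 := by
  obtain ⟨z, hz, hz0⟩ := Submodule.exists_mem_ne_zero_of_ne_bot hXZ
  have hle : X ⊓ Z ≤ Submodule.span F {z} := by
    intro v hv
    by_contra hvz
    have hli : LinearIndependent F ![z, v] := by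
      rw [LinearIndependent.pair_iff' hz0]
      intro a ha
      exact hvz (Submodule.mem_span_singleton.2 ⟨a, ha⟩)
    exact hne ((existsUnique_block hD hli).unique ⟨hX, hz.1, hv.1⟩ ⟨hZ, hz.2, hv.2⟩)
  have heq : X ⊓ Z = Submodule.span F {z} :=
    le_antisymm hle ((Submodule.span_singleton_le_iff_mem _ _).2 hz)
  rw [heq, finrank_span_singleton hz0]

open Classical in
lemma card_mem_notMem {F V : Type*} [Field F] [Fintype F] [AddCommGroup V] [Module F V] [Fintype V]
    {U W : Submodule F V} (h : U ≤ W) :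
    (Finset.univ.filter fun v => v ∈ W ∧ v ∉ U).card + Fintype.card F ^ Module.finrank F U
      = Fintype.card F ^ Module.finrank F W := by
  have hc (A : Submodule F V) :
      Fintype.card F ^ Module.finrank F A = (Finset.univ.filter fun v => v ∈ A).card := by
    rw [← Module.card_eq_pow_finrank (K := F) (V := A), Fintype.card_subtype]
  rw [hc, hc, ← Finset.card_union_of_disjoint]
  · congr 1
    ext v
    have := @h v
    simp only [Finset.mem_union, Finset.mem_filter, Finset.mem_univ, true_and]
    tauto
  · rw [Finset.disjoint_filter]
    tauto

theorem stmt_16 (F : Type*) [Field F] [Fintype F] (q : ℕ) (hq : Fintype.card F = q)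
    (D : Set (Submodule F (Fin 7 → F))) (hD : IsSteiner F 2 3 7 D)
    (Z : Submodule F (Fin 7 → F)) (hZ : Z ∈ D) :
    {X | X ∈ D ∧ X ≠ Z ∧ X ⊓ Z ≠ ⊥}.ncard = q ^ 2 * (q ^ 2 + 1) * (q ^ 2 + q + 1) := by
  classical
  have hq1 : 1 < q := hq ▸ Fintype.one_lt_card
  have : Finite (Submodule F (Fin 7 → F)) :=
    Finite.of_injective _ (SetLike.coe_injective (A := Submodule F (Fin 7 → F)))
  set S := {X | X ∈ D ∧ X ≠ Z ∧ X ⊓ Z ≠ ⊥} with hS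
  have hfin : S.Finite := Set.toFinite S
  rw [Set.ncard_eq_toFinset_card S hfin]
  set t := hfin.toFinset with ht
  let P : Finset ((Fin 7 → F) × (Fin 7 → F)) :=
    (Finset.univ.filter fun z => z ∈ Z ∧ z ∉ (⊥ : Submodule F (Fin 7 → F))) ×ˢ
      (Finset.univ.filter fun v => v ∈ (⊤ : Submodule F (Fin 7 → F)) ∧ v ∉ Z)
  have key := Finset.card_mul_eq_card_mul (s := P) (t := t) (m := 1) (n := (q - 1) * (q ^ 3 - q))
    (fun p X => p.1 ∈ X ∧ p.2 ∈ X) ?_ ?_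
  · have h1 := card_mem_notMem (F := F) (bot_le : (⊥ : Submodule F (Fin 7 → F)) ≤ Z)
    have h2 := card_mem_notMem (F := F) (le_top : Z ≤ ⊤)
    rw [finrank_bot, hD.1 Z hZ, hq, pow_zero] at h1
    rw [hD.1 Z hZ, finrank_top, Module.finrank_fin_fun, hq] at h2
    rw [Finset.card_product, mul_one] at key
    have h3 : q ≤ q ^ 3 := Nat.le_self_pow (by norm_num) q
    zify [hq1.le, h3] at key h1 h2 ⊢
    rw [eq_sub_of_add_eq h1, eq_sub_of_add_eq h2] at key
    have hq1' : (1 : ℤ) < q := by exact_mod_cast hq1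
    have hpos : ((q : ℤ) - 1) * (q ^ 3 - q) ≠ 0 := by
      have : ((q : ℤ) - 1) * (q ^ 3 - q) = (q - 1) * (q - 1) * q * (q + 1) := by ring
      rw [this]
      have : (0 : ℤ) < q - 1 := by linarith
      positivity
    apply mul_right_cancel₀ hpos
    rw [← key]
    ring
  · rintro ⟨z, v⟩ hp
    simp only [P, Finset.mem_product, Finset.mem_filter, Finset.mem_univ, true_and,
      Submodule.mem_bot, Submodule.mem_top] at hp
    obtain ⟨⟨hz, hz0⟩, hv⟩ := hp
    have hli : LinearIndependent F ![z, v] := by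
      rw [LinearIndependent.pair_iff' hz0]
      rintro a rfl
      exact hv (Z.smul_mem a hz)
    obtain ⟨B, ⟨hB, hzB, hvB⟩, huniq⟩ := existsUnique_block hD hli
    rw [Finset.card_eq_one]
    refine ⟨B, ?_⟩
    ext X
    simp only [Finset.bipartiteAbove, Finset.mem_filter, Finset.mem_singleton, ht,
      Set.Finite.mem_toFinset, hS, Set.mem_ofPred_eq]
    constructor
    · rintro ⟨⟨hX, -⟩, h⟩
      exact huniq X ⟨hX, h⟩
    · rintro rfl
      refine ⟨⟨hB, ?_, ?_⟩, hzB, hvB⟩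
      · rintro rfl
        exact hv hvB
      · exact (Submodule.ne_bot_iff _).2 ⟨z, ⟨hzB, hz⟩, hz0⟩
  · intro X hX
    simp only [ht, Set.Finite.mem_toFinset, hS, Set.mem_ofPred_eq] at hX
    obtain ⟨hXD, hne, hXZ⟩ := hX
    have hr := finrank_inf_eq_one hD hXD hZ hne hXZ
    have h1 := card_mem_notMem (F := F) (bot_le : (⊥ : Submodule F (Fin 7 → F)) ≤ X ⊓ Z)
    have h2 := card_mem_notMem (F := F) (inf_le_left : X ⊓ Z ≤ X)
    rw [finrank_bot, hr, hq, pow_zero, pow_one] at h1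
    rw [hr, hD.1 X hXD, hq, pow_one] at h2
    rw [← Nat.eq_sub_of_add_eq h1, ← Nat.eq_sub_of_add_eq h2, ← Finset.card_product]
    congr 1
    ext ⟨z, v⟩
    simp only [P, Finset.bipartiteBelow, Finset.mem_product, Finset.mem_filter, Finset.mem_univ,
      true_and, Submodule.mem_bot, Submodule.mem_top, Submodule.mem_inf]
    tauto
end

section
/- Let q be a prime power, let D be a q-Steiner system S_q(2,3,7), and let Z_1, Z_2 ∈ D be two blocks with Z_1 ∩ Z_2 = {0}. Then the number of blocks X ∈ D with X ≠ Z_1, X ∩ Z_1 ≠ {0} and X ∩ Z_2 = {0} is exactly (q^2+q+1)(q^4−q−1). -/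
section
variable {F : Type*} [Field F] {n : ℕ} {D : Set (Submodule F (Fin n → F))}

theorem IsSteiner.existsUnique_mem (hD : IsSteiner F 2 3 n D) {u w : Fin n → F} (hu : u ≠ 0)
    (hw : w ∉ Submodule.span F {u}) : ∃! X, X ∈ D ∧ u ∈ X ∧ w ∈ X := by
  have hli : LinearIndependent F ![u, w] := by
    rw [LinearIndependent.pair_iff' hu]
    intro a ha
    exact hw (Submodule.mem_span_singleton.2 ⟨a, ha⟩)
  have hfr : Module.finrank F (Submodule.span F (Set.range ![u, w])) = 2 := by
    simpa using finrank_span_eq_card hli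
  have := hD.2 _ hfr
  simpa [Submodule.span_le, Set.insert_subset_iff, and_comm] using this

theorem IsSteiner.eq_of_mem (hD : IsSteiner F 2 3 n D) {X Y : Submodule F (Fin n → F)}
    (hX : X ∈ D) (hY : Y ∈ D) {u w : Fin n → F} (hu : u ≠ 0) (hw : w ∉ Submodule.span F {u})
    (huX : u ∈ X) (hwX : w ∈ X) (huY : u ∈ Y) (hwY : w ∈ Y) : X = Y :=
  (hD.existsUnique_mem hu hw).unique ⟨hX, huX, hwX⟩ ⟨hY, huY, hwY⟩

theorem notMem_span_of_notMem {Z : Submodule F (Fin n → F)} {u w : Fin n → F} (hu : u ∈ Z)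
    (hw : w ∉ Z) : w ∉ Submodule.span F {u} := fun h =>
  hw ((Submodule.span_singleton_le_iff_mem u Z).2 hu h)

theorem IsSteiner.finrank_inf (hD : IsSteiner F 2 3 n D) {X Y : Submodule F (Fin n → F)}
    (hX : X ∈ D) (hY : Y ∈ D) (hne : X ≠ Y) (h : X ⊓ Y ≠ ⊥) :
    Module.finrank F (X ⊓ Y : Submodule F (Fin n → F)) = 1 := by
  obtain ⟨u, hu, hu0⟩ := Submodule.exists_mem_ne_zero_of_ne_bot h
  have : X ⊓ Y = Submodule.span F {u} := by
    apply le_antisymm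
    · intro w hw
      by_contra hws
      exact hne (hD.eq_of_mem hX hY hu0 hws hu.1 hw.1 hu.2 hw.2)
    · rwa [Submodule.span_singleton_le_iff_mem]
  rw [this, finrank_span_singleton hu0]

variable [Fintype F]

theorem ncard_submodule (W : Submodule F (Fin n → F)) :
    (W : Set (Fin n → F)).ncard = Fintype.card F ^ Module.finrank F W := by
  rw [← Nat.card_coe_set_eq, ← Nat.card_eq_fintype_card]
  exact Module.natCard_eq_pow_finrank

theorem ncard_diff_zero (W : Submodule F (Fin n → F)) :
    (((W : Set (Fin n → F)) \ {0}).ncard : ℤ)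
      = (Fintype.card F : ℤ) ^ Module.finrank F W - 1 := by
  have h := Set.ncard_sdiff_add_ncard_of_subset (s := {(0 : Fin n → F)})
    (t := (W : Set (Fin n → F))) (by simp)
  rw [ncard_submodule, Set.ncard_singleton] at h
  zify at h
  linarith

/-- Double count of the incidences between the blocks in `E` and the pairs `(u, w)` with
`0 ≠ u ∈ Z` and `w ∈ T`, where `T` is disjoint from `Z`, so that each pair is independent and spans
a line contained in exactly one block. -/
theorem card_blocks_mul (hD : IsSteiner F 2 3 n D) (Z : Submodule F (Fin n → F))
    (T : Set (Fin n → F)) (hT : ∀ w ∈ T, w ∉ Z) (E : Set (Submodule F (Fin n → F)))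
    (hED : E ⊆ D)
    (hE : ∀ X ∈ D, ∀ u ∈ Z, u ≠ 0 → ∀ w ∈ T, u ∈ X → w ∈ X → X ∈ E) (a b : ℕ)
    (ha : ∀ X ∈ E, (((X ⊓ Z : Submodule F (Fin n → F)) : Set (Fin n → F)) \ {0}).ncard = a)
    (hb : ∀ X ∈ E, ((X : Set (Fin n → F)) ∩ T).ncard = b) :
    E.ncard * (a * b) = ((Z : Set (Fin n → F)) \ {0}).ncard * T.ncard := by
  classical
  have key : ∀ p : (Fin n → F) × (Fin n → F), p ∈ ((Z : Set (Fin n → F)) \ {0}) ×ˢ T →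
      ∃! X, X ∈ D ∧ p.1 ∈ X ∧ p.2 ∈ X := fun p hp =>
    hD.existsUnique_mem hp.1.2 (notMem_span_of_notMem hp.1.1 (hT _ hp.2))
  choose! f hf hf' using key
  have hEf : E.Finite := Set.toFinite E
  have hPf : (((Z : Set (Fin n → F)) \ {0}) ×ˢ T).Finite := Set.toFinite _
  have hcount := Finset.card_eq_sum_card_fiberwise (f := f) (s := hPf.toFinset)
    (t := hEf.toFinset) (by
      intro p hp
      have hp := hPf.mem_toFinset.1 hp
      obtain ⟨h1, h2, h3⟩ := hf p hp
      exact hEf.mem_toFinset.2 (hE _ h1 _ hp.1.1 hp.1.2 _ hp.2 h2 h3))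
  have hfib : ∀ X ∈ hEf.toFinset, (hPf.toFinset.filter fun p => f p = X).card = a * b := by
    intro X hX
    rw [hEf.mem_toFinset] at hX
    rw [← ha X hX, ← hb X hX, ← Set.ncard_prod, ← Set.ncard_coe_finset]
    congr 1
    ext p
    simp only [Finset.coe_filter, Set.Finite.mem_toFinset, Set.mem_ofPred_eq]
    constructor
    · rintro ⟨hp, rfl⟩
      obtain ⟨-, h2, h3⟩ := hf p hp
      exact ⟨⟨⟨h2, hp.1.1⟩, hp.1.2⟩, h3, hp.2⟩
    · rintro ⟨⟨⟨h2, h1⟩, h0⟩, h3, h4⟩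
      have hp : p ∈ ((Z : Set (Fin n → F)) \ {0}) ×ˢ T := ⟨⟨h1, h0⟩, h4⟩
      exact ⟨hp, (hf' p hp X ⟨hED hX, h2, h3⟩).symm⟩
  rw [Finset.sum_congr rfl hfib, Finset.sum_const, smul_eq_mul,
    ← Set.ncard_eq_toFinset_card _ hEf, ← Set.ncard_eq_toFinset_card _ hPf, Set.ncard_prod]
    at hcount
  exact hcount.symm

end

theorem stmt_18 (F : Type*) [Field F] [Fintype F] (q : ℕ) (hq : Fintype.card F = q)
    (D : Set (Submodule F (Fin 7 → F))) (hD : IsSteiner F 2 3 7 D)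
    (Z₁ Z₂ : Submodule F (Fin 7 → F)) (hZ₁ : Z₁ ∈ D) (hZ₂ : Z₂ ∈ D)
    (hdisj : Z₁ ⊓ Z₂ = ⊥) :
    ({X | X ∈ D ∧ X ≠ Z₁ ∧ X ⊓ Z₁ ≠ ⊥ ∧ X ⊓ Z₂ = ⊥}.ncard : ℤ) =
      (q ^ 2 + q + 1) * (q ^ 4 - q - 1) := by
  have hq1 : 1 < q := hq ▸ Fintype.one_lt_card
  have hqq : q ≤ q ^ 3 := Nat.le_self_pow (by norm_num) q
  set A : Set (Submodule F (Fin 7 → F)) := {X | X ∈ D ∧ X ≠ Z₁ ∧ X ⊓ Z₁ ≠ ⊥} with hA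
  set B : Set (Submodule F (Fin 7 → F)) :=
    {X | X ∈ D ∧ X ≠ Z₁ ∧ X ⊓ Z₁ ≠ ⊥ ∧ X ⊓ Z₂ ≠ ⊥} with hB
  have hdis : ∀ w, w ∈ Z₁ → w ∈ Z₂ → w = 0 := fun w h1 h2 => by
    have : w ∈ Z₁ ⊓ Z₂ := ⟨h1, h2⟩
    rwa [hdisj, Submodule.mem_bot] at this
  have inf_ne : ∀ {X Z : Submodule F (Fin 7 → F)} {u : Fin 7 → F}, u ∈ X → u ∈ Z → u ≠ 0 →
      X ⊓ Z ≠ ⊥ := fun h1 h2 h0 => Submodule.ne_bot_iff _ |>.2 ⟨_, ⟨h1, h2⟩, h0⟩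
  have hpt : ∀ X ∈ D, ∀ Z ∈ D, X ≠ Z → X ⊓ Z ≠ ⊥ →
      (((X ⊓ Z : Submodule F (Fin 7 → F)) : Set (Fin 7 → F)) \ {0}).ncard = q - 1 := by
    intro X hX Z hZ hne hb
    have := ncard_diff_zero (X ⊓ Z)
    rw [hD.finrank_inf hX hZ hne hb, hq, pow_one] at this
    omega
  have hZ : ∀ Z ∈ D, (((Z : Set (Fin 7 → F)) \ {0}).ncard : ℤ) = (q : ℤ) ^ 3 - 1 := by
    intro Z hZ
    rw [ncard_diff_zero, hq, hD.1 Z hZ]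
  have hcA := card_blocks_mul hD Z₁ ((Z₁ : Set (Fin 7 → F))ᶜ) (fun w h => h) A
    (fun X h => h.1)
    (fun X hX u hu hu0 w hw huX hwX =>
      ⟨hX, fun h => hw (h ▸ hwX), inf_ne huX hu hu0⟩) (q - 1) (q ^ 3 - q)
    (fun X hX => hpt X hX.1 Z₁ hZ₁ hX.2.1 hX.2.2)
    (fun X hX => by
      have h := Set.ncard_inter_add_ncard_sdiff_eq_ncard (X : Set (Fin 7 → F)) (Z₁ : Set _)
      rw [← Submodule.coe_inf, ncard_submodule, ncard_submodule,
        hD.finrank_inf hX.1 hZ₁ hX.2.1 hX.2.2, hD.1 X hX.1, hq, pow_one] at h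
      rw [← Set.sdiff_eq_compl_inter.trans (Set.inter_comm _ _)]
      omega)
  have hcB := card_blocks_mul hD Z₁ ((Z₂ : Set (Fin 7 → F)) \ {0})
    (fun w h h1 => h.2 (hdis w h1 h.1)) B (fun X h => h.1)
    (fun X hX u hu hu0 w hw huX hwX =>
      ⟨hX, fun h => hw.2 (hdis w (h ▸ hwX) hw.1), inf_ne huX hu hu0, inf_ne hwX hw.1 hw.2⟩)
    (q - 1) (q - 1)
    (fun X hX => hpt X hX.1 Z₁ hZ₁ hX.2.1 hX.2.2.1)
    (fun X hX => by
      rw [← Set.inter_sdiff_assoc, ← Submodule.coe_inf]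
      refine hpt X hX.1 Z₂ hZ₂ ?_ hX.2.2.2
      rintro rfl
      exact hX.2.2.1 (by rwa [inf_comm]))
  have hsplit : {X | X ∈ D ∧ X ≠ Z₁ ∧ X ⊓ Z₁ ≠ ⊥ ∧ X ⊓ Z₂ = ⊥} = A \ B := by
    ext X
    simp only [hA, hB, Set.mem_sdiff, Set.mem_ofPred_eq]
    tauto
  have hBA : B ⊆ A := fun X h => ⟨h.1, h.2.1, h.2.2.1⟩
  have hdiff := Set.ncard_sdiff_add_ncard_of_subset hBA
  have hcompl : (((Z₁ : Set (Fin 7 → F))ᶜ).ncard : ℤ) = (q : ℤ) ^ 7 - q ^ 3 := by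
    have h := Set.ncard_add_ncard_compl (Z₁ : Set (Fin 7 → F))
    rw [ncard_submodule, hD.1 Z₁ hZ₁, hq] at h
    simp only [Nat.card_eq_fintype_card, Fintype.card_fun, Fintype.card_fin, hq] at h
    zify at h
    linarith
  zify [hq1.le, hqq] at hcA hcB hdiff
  rw [hZ Z₁ hZ₁, hcompl] at hcA
  rw [hZ Z₁ hZ₁, hZ Z₂ hZ₂] at hcB
  have hq1' : (1 : ℤ) < q := by exact_mod_cast hq1
  generalize (q : ℤ) = x at *
  have hx1 : x - 1 ≠ 0 := by linarith
  have hx3 : x ^ 3 - x ≠ 0 := by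
    have : 0 < x * (x - 1) * (x + 1) := by
      have : 0 < x - 1 := by linarith
      positivity
    intro h
    linarith [show x * (x - 1) * (x + 1) = x ^ 3 - x by ring]
  have eA : (A.ncard : ℤ) = (x ^ 2 + x + 1) * (x ^ 4 + x ^ 2) :=
    mul_right_cancel₀ (mul_ne_zero hx1 hx3) (hcA.trans (by ring))
  have eB : (B.ncard : ℤ) = (x ^ 2 + x + 1) ^ 2 :=
    mul_right_cancel₀ (mul_ne_zero hx1 hx1) (hcB.trans (by ring))
  rw [hsplit]
  linear_combination hdiff + eA - eB
end

section
/- Let q be a prime power, let D be a q-Steiner system S_q(2,3,7), and let Z_1, Z_2 ∈ D be two blocks with Z_1 ∩ Z_2 = {0}. Then the number of blocks X ∈ D with X ∩ Z_1 = {0} and X ∩ Z_2 = {0} is exactly q(q^7 − q^5 − q^4 − 2q^3 + q^2 + 2q + 2). -/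
section
open Finset Classical

variable {F : Type*} [Field F] {D : Set (Submodule F (Fin 7 → F))}

/-- The unique block through the plane spanned by `v` and `w`. -/
theorem existsUnique_block_s19 (hD : IsSteiner F 2 3 7 D) {v w : Fin 7 → F} (hv : v ≠ 0)
    (hw : w ∉ Submodule.span F {v}) : ∃! B, B ∈ D ∧ v ∈ B ∧ w ∈ B := by
  have hli : LinearIndependent F ![v, w] := by
    rw [LinearIndependent.pair_iff' hv]
    intro a ha
    exact hw (Submodule.mem_span_singleton.2 ⟨a, ha⟩)
  have h2 := finrank_span_eq_card hli
  have := hD.2 _ (by simpa using h2)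
  simpa [Submodule.span_le, Set.insert_subset_iff, and_comm] using this

variable [Fintype F]

/-- The nonzero vectors of a subspace. -/
noncomputable def nz (W : Submodule F (Fin 7 → F)) : Finset (Fin 7 → F) :=
  univ.filter fun v => v ∈ W ∧ v ≠ 0

theorem mem_nz {W : Submodule F (Fin 7 → F)} {v : Fin 7 → F} : v ∈ nz W ↔ v ∈ W ∧ v ≠ 0 := by
  simp [nz]

theorem card_filter_mem (W : Submodule F (Fin 7 → F)) :
    #(univ.filter fun v => v ∈ W) = Fintype.card F ^ Module.finrank F W := by
  rw [← Module.card_eq_pow_finrank (K := F) (V := W), Fintype.card_subtype]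

theorem card_nz (W : Submodule F (Fin 7 → F)) :
    (#(nz W) : ℤ) = (Fintype.card F : ℤ) ^ Module.finrank F W - 1 := by
  have h : nz W = (univ.filter fun v => v ∈ W).erase 0 := by
    ext v
    simp [nz, and_comm]
  rw [h, cast_card_erase_of_mem (by simp), card_filter_mem]
  push_cast
  rfl

theorem card_blocks_pair (hD : IsSteiner F 2 3 7 D) {v w : Fin 7 → F} (hv : v ≠ 0)
    (hw : w ∉ Submodule.span F {v}) :
    #(D.toFinset.filter fun X => v ∈ X ∧ w ∈ X) = 1 := by
  obtain ⟨B, hB, hu⟩ := existsUnique_block_s19 hD hv hw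
  rw [card_eq_one]
  refine ⟨B, ?_⟩
  ext X
  simp only [mem_filter, Set.mem_toFinset, mem_singleton]
  exact ⟨fun h => hu X h, fun h => h ▸ hB⟩

theorem card_blocks_through (hD : IsSteiner F 2 3 7 D) {v : Fin 7 → F} (hv : v ≠ 0) :
    (#(D.toFinset.filter fun X => v ∈ X) : ℤ) =
      (Fintype.card F : ℤ) ^ 4 + (Fintype.card F : ℤ) ^ 2 + 1 := by
  have hspan : Module.finrank F (Submodule.span F {v}) = 1 := finrank_span_singleton hv
  have hout : ∀ W : Submodule F (Fin 7 → F), v ∈ W →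
      (#(univ.filter fun w => w ∈ W ∧ w ∉ Submodule.span F {v}) : ℤ) =
        (Fintype.card F : ℤ) ^ Module.finrank F W - Fintype.card F := by
    intro W hW
    have hle : Submodule.span F {v} ≤ W := by simpa [Submodule.span_le] using hW
    have h : (univ.filter fun w => w ∈ W ∧ w ∉ Submodule.span F {v}) =
        (univ.filter fun w => w ∈ W) \ univ.filter fun w => w ∈ Submodule.span F {v} := by
      ext w
      simp
    rw [h, cast_card_sdiff, card_filter_mem, card_filter_mem, hspan]
    · push_cast
      ring
    · intro w hw
      simp only [mem_filter, mem_univ, true_and] at hw ⊢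
      exact hle hw
  have key := sum_card_bipartiteAbove_eq_sum_card_bipartiteBelow
    (s := D.toFinset.filter fun X => v ∈ X)
    (t := univ.filter fun w => w ∉ Submodule.span F {v}) (fun X w => w ∈ X)
  have hR : ∀ w ∈ univ.filter (fun w => w ∉ Submodule.span F {v}),
      #((D.toFinset.filter fun X => v ∈ X).bipartiteBelow (fun X w => w ∈ X) w) = 1 := by
    intro w hw
    rw [bipartiteBelow, filter_filter]
    exact card_blocks_pair hD hv (by simpa using hw)
  have hL : ∀ X ∈ D.toFinset.filter (fun X => v ∈ X),
      (#((univ.filter fun w => w ∉ Submodule.span F {v}).bipartiteAbove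
        (fun X w => w ∈ X) X) : ℤ) = (Fintype.card F : ℤ) ^ 3 - Fintype.card F := by
    intro X hX
    simp only [mem_filter, Set.mem_toFinset] at hX
    rw [bipartiteAbove, filter_filter, ← hD.1 X hX.1, ← hout X hX.2]
    simp only [and_comm]
  rw [sum_congr rfl hR] at key
  have key' := congrArg (Nat.cast : ℕ → ℤ) key
  have htop := hout ⊤ trivial
  simp only [Submodule.mem_top, true_and, finrank_top, Module.finrank_fin_fun] at htop
  rw [Nat.cast_sum, sum_congr rfl hL] at key'
  simp only [sum_const, smul_eq_mul, nsmul_eq_mul, mul_one, htop] at key'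
  have hq : (2 : ℤ) ≤ Fintype.card F := by exact_mod_cast Fintype.one_lt_card (α := F)
  have hne : (Fintype.card F : ℤ) ^ 3 - Fintype.card F ≠ 0 := by
    have : 0 < (Fintype.card F : ℤ) * ((Fintype.card F : ℤ) ^ 2 - 1) :=
      mul_pos (by linarith) (by nlinarith)
    intro h
    linarith
  apply mul_right_cancel₀ hne
  rw [key']
  ring

theorem nz_inf (X W : Submodule F (Fin 7 → F)) :
    (nz W).filter (fun z => z ∈ X) = nz (X ⊓ W) := by
  ext z
  simp only [mem_filter, mem_nz, Submodule.mem_inf]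
  tauto

/-- Double count of the incident pairs (block, nonzero vector of `W`). -/
theorem sum_card_inf (hD : IsSteiner F 2 3 7 D) (W : Submodule F (Fin 7 → F)) :
    ∑ X ∈ D.toFinset, (#(nz (X ⊓ W)) : ℤ) =
      ((Fintype.card F : ℤ) ^ Module.finrank F W - 1) *
        ((Fintype.card F : ℤ) ^ 4 + (Fintype.card F : ℤ) ^ 2 + 1) := by
  have key := congrArg (Nat.cast : ℕ → ℤ)
    (sum_card_bipartiteAbove_eq_sum_card_bipartiteBelow
      (s := D.toFinset) (t := nz W) (fun X w => w ∈ X))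
  simp only [bipartiteAbove, bipartiteBelow, nz_inf, Nat.cast_sum] at key
  rw [key, sum_congr rfl fun w hw => card_blocks_through hD (mem_nz.1 hw).2, sum_const,
    nsmul_eq_mul, card_nz]

/-- Double count of the triples (block, nonzero vector of `Z₁`, nonzero vector of `Z₂`). -/
theorem sum_card_inf_mul (hD : IsSteiner F 2 3 7 D) (Z₁ Z₂ : Submodule F (Fin 7 → F))
    (h : Z₁ ⊓ Z₂ = ⊥) :
    ∑ X ∈ D.toFinset, (#(nz (X ⊓ Z₁)) : ℤ) * #(nz (X ⊓ Z₂)) = #(nz Z₁) * #(nz Z₂) := by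
  have key := sum_card_bipartiteAbove_eq_sum_card_bipartiteBelow
      (s := D.toFinset) (t := nz Z₁ ×ˢ nz Z₂) (fun X p => p.1 ∈ X ∧ p.2 ∈ X)
  have hL : ∀ X, (nz Z₁ ×ˢ nz Z₂).bipartiteAbove (fun X p => p.1 ∈ X ∧ p.2 ∈ X) X =
      nz (X ⊓ Z₁) ×ˢ nz (X ⊓ Z₂) := by
    intro X
    rw [bipartiteAbove, filter_product (fun z => z ∈ X) (fun z => z ∈ X), nz_inf, nz_inf]
  have hR : ∀ p ∈ nz Z₁ ×ˢ nz Z₂,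
      #(D.toFinset.bipartiteBelow (fun X p => p.1 ∈ X ∧ p.2 ∈ X) p) = 1 := by
    rintro ⟨v, w⟩ hp
    simp only [mem_product, mem_nz] at hp
    obtain ⟨⟨hv, hv0⟩, hw, hw0⟩ := hp
    refine card_blocks_pair hD hv0 fun hs => hw0 ?_
    have hle : Submodule.span F {v} ≤ Z₁ := by simpa [Submodule.span_le] using hv
    have : w ∈ Z₁ ⊓ Z₂ := ⟨hle hs, hw⟩
    simpa [h] using this
  simp only [hL] at key
  rw [sum_congr rfl hR] at key
  simp only [card_product, sum_const, smul_eq_mul, mul_one] at key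
  exact_mod_cast key

/-- Two distinct blocks that meet nontrivially meet in a one-dimensional subspace, which has `q - 1`
nonzero vectors; the second summand corrects the count `q - 1` to `q³ - 1` when `X = Z`. -/
theorem card_nz_inf (hD : IsSteiner F 2 3 7 D) {X Z : Submodule F (Fin 7 → F)}
    (hX : X ∈ D) (hZ : Z ∈ D) :
    (#(nz (X ⊓ Z)) : ℤ) = ((Fintype.card F : ℤ) - 1) * (if X ⊓ Z = ⊥ then 0 else 1) +
      (if X = Z then (Fintype.card F : ℤ) ^ 3 - Fintype.card F else 0) := by
  rw [card_nz]
  have h0 : X ⊓ Z = ⊥ → Module.finrank F ↥(X ⊓ Z) = 0 := fun h => by rw [h, finrank_bot]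
  by_cases hXZ : X = Z
  · subst hXZ
    have h3 := hD.1 X hX
    have hne : X ≠ ⊥ := by
      rintro rfl
      simp at h3
    rw [inf_idem, h3, if_neg hne, if_pos rfl]
    ring
  · by_cases hb : X ⊓ Z = ⊥
    · rw [h0 hb]
      simp [hb, hXZ]
    · obtain ⟨v, hv, hv0⟩ := Submodule.exists_mem_ne_zero_of_ne_bot hb
      have heq : X ⊓ Z = Submodule.span F {v} := by
        apply le_antisymm
        · intro w hw
          by_contra hws
          exact hXZ ((existsUnique_block_s19 hD hv0 hws).unique ⟨hX, hv.1, hw.1⟩ ⟨hZ, hv.2, hw.2⟩)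
        · simpa [Submodule.span_le] using hv
      simp only [hb, hXZ, if_false]
      rw [heq, finrank_span_singleton hv0]
      ring

end

theorem stmt_19 (F : Type*) [Field F] [Fintype F] (q : ℕ) (hq : Fintype.card F = q)
    (D : Set (Submodule F (Fin 7 → F))) (hD : IsSteiner F 2 3 7 D)
    (Z₁ Z₂ : Submodule F (Fin 7 → F)) (hZ₁ : Z₁ ∈ D) (hZ₂ : Z₂ ∈ D)
    (hdisj : Z₁ ⊓ Z₂ = ⊥) :
    ({X | X ∈ D ∧ X ⊓ Z₁ = ⊥ ∧ X ⊓ Z₂ = ⊥}.ncard : ℤ) =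
      q * (q ^ 7 - q ^ 5 - q ^ 4 - 2 * q ^ 3 + q ^ 2 + 2 * q + 2) := by
  classical
  have hq2 : (2 : ℤ) ≤ q := by
    rw [← hq]
    exact_mod_cast Fintype.one_lt_card (α := F)
  have h3 : ∀ X ∈ D, Module.finrank F X = 3 := hD.1
  have hset : {X | X ∈ D ∧ X ⊓ Z₁ = ⊥ ∧ X ⊓ Z₂ = ⊥} =
      ↑(D.toFinset.filter fun X => X ⊓ Z₁ = ⊥ ∧ X ⊓ Z₂ = ⊥) := by
    ext X
    simp
  rw [hset, Set.ncard_coe_finset, Finset.card_filter]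
  have hb := sum_card_inf hD ⊤
  have h1 := sum_card_inf hD Z₁
  have h2 := sum_card_inf hD Z₂
  have h12 := sum_card_inf_mul hD Z₁ Z₂ hdisj
  rw [card_nz, card_nz, h3 _ hZ₁, h3 _ hZ₂] at h12
  rw [h3 _ hZ₁] at h1
  rw [h3 _ hZ₂] at h2
  rw [finrank_top, Module.finrank_fin_fun] at hb
  have hcb : ∀ X ∈ D.toFinset, ((nz (X ⊓ ⊤)).card : ℤ) = (q : ℤ) ^ 3 - 1 := by
    intro X hX
    rw [inf_top_eq, card_nz, h3 X (by simpa using hX), hq]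
  rw [Finset.sum_congr rfl hcb, Finset.sum_const, nsmul_eq_mul] at hb
  have hne : (q : ℤ) ^ 3 - 1 ≠ 0 := by nlinarith [pow_le_pow_left₀ (by norm_num) hq2 3]
  have hne1 : ((q : ℤ) - 1) ^ 2 ≠ 0 := pow_ne_zero 2 (by linarith)
  -- Inclusion-exclusion, with the indicator of `X ⊓ Zᵢ ≠ ⊥` expressed through
  -- the cardinality of `nz (X ⊓ Zᵢ)`.
  have hpt : ∀ X ∈ D.toFinset,
      ((q : ℤ) - 1) ^ 2 * ((if X ⊓ Z₁ = ⊥ ∧ X ⊓ Z₂ = ⊥ then 1 else 0 : ℕ) : ℤ) =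
        ((q : ℤ) - 1) ^ 2
        - (q - 1) * ((nz (X ⊓ Z₁)).card - if X = Z₁ then (q : ℤ) ^ 3 - q else 0)
        - (q - 1) * ((nz (X ⊓ Z₂)).card - if X = Z₂ then (q : ℤ) ^ 3 - q else 0)
        + (nz (X ⊓ Z₁)).card * (nz (X ⊓ Z₂)).card := by
    intro X hX
    have hX' : X ∈ D := by simpa using hX
    have e1 := card_nz_inf hD hX' hZ₁
    have e2 := card_nz_inf hD hX' hZ₂
    rw [hq] at e1 e2
    -- A block equal to one of the `Zᵢ` is disjoint from the other, so no cross term survives.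
    have c1 : X = Z₁ → X ⊓ Z₂ = ⊥ := fun h => h ▸ hdisj
    have c2 : X = Z₂ → X ⊓ Z₁ = ⊥ := fun h => by rw [h, inf_comm]; exact hdisj
    have c3 : X = Z₁ → X ≠ Z₂ := by
      rintro h rfl
      have := h3 X hX'
      have h0 := c1 h
      rw [inf_idem] at h0
      rw [h0] at this
      simp at this
    rw [e1, e2]
    by_cases a1 : X = Z₁ <;> by_cases a2 : X = Z₂ <;> by_cases d1 : X ⊓ Z₁ = ⊥ <;>
      by_cases d2 : X ⊓ Z₂ = ⊥ <;>
      -- `eq_true` makes `simp` rewrite the proposition `X = Zᵢ` instead of substituting for `X`.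
      first
      | exact absurd a2 (c3 a1)
      | exact absurd (c1 a1) d2
      | exact absurd (c2 a2) d1
      | (simp only [eq_true a1, a2, d1, d2, if_true, if_false, and_true, and_false]
         push_cast
         ring1)
      | (simp only [a1, eq_true a2, d1, d2, if_true, if_false, and_true, and_false]
         push_cast
         ring1)
      | (simp only [a1, a2, d1, d2, if_true, if_false, and_true, and_false]
         push_cast
         ring1)
  apply mul_left_cancel₀ hne1
  rw [Nat.cast_sum, Finset.mul_sum, Finset.sum_congr rfl hpt, Finset.sum_add_distrib,
    Finset.sum_sub_distrib, Finset.sum_sub_distrib, ← Finset.mul_sum, ← Finset.mul_sum,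
    Finset.sum_sub_distrib, Finset.sum_sub_distrib, h12]
  rw [hq] at h1 h2 hb ⊢
  have hm1 : Z₁ ∈ D.toFinset := by simpa using hZ₁
  have hm2 : Z₂ ∈ D.toFinset := by simpa using hZ₂
  rw [Finset.sum_ite_eq', Finset.sum_ite_eq', if_pos hm1, if_pos hm2, Finset.sum_const,
    nsmul_eq_mul]
  rw [h1, h2]
  apply mul_left_cancel₀ hne
  linear_combination ((q : ℤ) - 1) ^ 2 * hb
end
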